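/- arXiv:2406.01351 — 2 statements merged into one kernel-verified Lean document; each statement's English description precedes it below -/
import Mathlib

section
/- Let Ω ⊆ ℝ² be open. Let B be the set of all real numbers of the form (∫_Ω (Δψ)² dx)/(∫_Ω |∇ψ|² dx), where ψ : ℝ² → ℝ ranges over smooth functions, compactly supported in Ω and not identically zero; let S be the set of all real numbers of the form (∫_Ω ‖Du‖² dx)/(∫_Ω |u|² dx), where u : ℝ² → ℝ² ranges over smooth vector fields, compactly supported in Ω, not identically zero, and with div u = ∂₁u₁ + ∂₂u₂ = 0 on ℝ². Then B ⊆ S; in particular, if B is nonempty then sInf S ≤ sInf B. -/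
open MeasureTheory

/-- First partial derivative (with respect to the first coordinate of `ℝ × ℝ`). -/
noncomputable def pd1 (f : ℝ × ℝ → ℝ) : ℝ × ℝ → ℝ := fun x => fderiv ℝ f x (1, 0)

/-- Second partial derivative (with respect to the second coordinate of `ℝ × ℝ`). -/
noncomputable def pd2 (f : ℝ × ℝ → ℝ) : ℝ × ℝ → ℝ := fun x => fderiv ℝ f x (0, 1)

/-- The Laplacian on `ℝ × ℝ`. -/
noncomputable def lap (f : ℝ × ℝ → ℝ) : ℝ × ℝ → ℝ := fun x => pd1 (pd1 f) x + pd2 (pd2 f) x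

/-!
If `ψ` is a stream function in `Ω`, its perpendicular gradient `u = (∂₂ψ, -∂₁ψ)` is a nonzero
divergence-free field in `Ω` with `|u|² = |∇ψ|²` and scalar curl `-Δψ`. For every planar field,
`(div u)² + (curl u)² = ‖Du‖² + 2 det Du`, and the Jacobian determinant is a null Lagrangian: it
integrates to zero for compactly supported `u`. So `∫ ‖Du‖² = ∫ (Δψ)²`, and the buckling quotient of
`ψ` is the Stokes quotient of `u`.
-/

section FDeriv

variable {E F : Type*} [NormedAddCommGroup E] [NormedSpace ℝ E]
  [NormedAddCommGroup F] [NormedSpace ℝ F]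

theorem contDiff_fderiv_apply_const {f : E → F} {m n : WithTop ℕ∞} (hf : ContDiff ℝ n f)
    (hmn : m + 1 ≤ n) (v : E) : ContDiff ℝ m (fun x => fderiv ℝ f x v) :=
  (hf.fderiv_right hmn).clm_apply contDiff_const

theorem fderiv_fderiv_apply_comm {f : E → F} {x : E} (hf : ContDiffAt ℝ 2 f x) (v w : E) :
    fderiv ℝ (fun y => fderiv ℝ f y v) x w = fderiv ℝ (fun y => fderiv ℝ f y w) x v := by
  have hdiff : DifferentiableAt ℝ (fderiv ℝ f) x :=
    (hf.fderiv_right (m := 1) (by norm_num)).differentiableAt one_ne_zero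
  have hsymm : IsSymmSndFDerivAt ℝ f x := hf.isSymmSndFDerivAt (by simp)
  rw [fderiv_clm_apply hdiff (differentiableAt_const v),
    fderiv_clm_apply hdiff (differentiableAt_const w)]
  simpa using hsymm w v

theorem eq_zero_of_fderiv_eq_zero_of_hasCompactSupport [NoncompactSpace E] {f : E → F}
    (hf : Differentiable ℝ f) (hfc : HasCompactSupport f) (hf' : ∀ x, fderiv ℝ f x = 0) :
    f = 0 := by
  obtain ⟨x₀, hx₀⟩ : ∃ x₀, x₀ ∉ tsupport f :=
    (Set.ne_univ_iff_exists_notMem _).mp hfc.isCompact.ne_univ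
  funext x
  exact (is_const_of_fderiv_eq_zero hf hf' x x₀).trans (image_eq_zero_of_notMem_tsupport hx₀)

theorem integrable_fderiv_apply_mul_fderiv_apply [MeasurableSpace E] [OpensMeasurableSpace E]
    {μ : Measure E} [IsFiniteMeasureOnCompacts μ] {f g : E → ℝ} (hf : ContDiff ℝ 1 f)
    (hfc : HasCompactSupport f) (hg : ContDiff ℝ 1 g) (v w : E) :
    Integrable (fun x => fderiv ℝ f x v * fderiv ℝ g x w) μ := by
  have hf' := (contDiff_fderiv_apply_const (m := 0) hf (by simp) v).continuous
  have hg' := (contDiff_fderiv_apply_const (m := 0) hg (by simp) w).continuous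
  exact (hf'.mul hg').integrable_of_hasCompactSupport (hfc.fderiv_apply ℝ v).mul_right

end FDeriv

section IntegrationByParts

variable {E : Type*} [NormedAddCommGroup E] [NormedSpace ℝ E] [FiniteDimensional ℝ E]
  [MeasurableSpace E] [BorelSpace E] {μ : Measure E} [μ.IsAddHaarMeasure] {f g : E → ℝ}

theorem integral_fderiv_apply_mul_of_hasCompactSupport (hf : ContDiff ℝ 1 f)
    (hfc : HasCompactSupport f) (hg : ContDiff ℝ 1 g) (v : E) :
    ∫ x, fderiv ℝ f x v * g x ∂μ = -∫ x, f x * fderiv ℝ g x v ∂μ := by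
  have hf' := (contDiff_fderiv_apply_const (m := 0) hf (by simp) v).continuous
  have hg' := (contDiff_fderiv_apply_const (m := 0) hg (by simp) v).continuous
  rw [integral_mul_fderiv_eq_neg_fderiv_mul_of_integrable _ _ _
    (fun x _ => hf.differentiable one_ne_zero x) (fun x _ => hg.differentiable one_ne_zero x),
    neg_neg]
  · exact (hf'.mul hg.continuous).integrable_of_hasCompactSupport (hfc.fderiv_apply ℝ v).mul_right
  · exact (hf.continuous.mul hg').integrable_of_hasCompactSupport hfc.mul_right
  · exact (hf.continuous.mul hg.continuous).integrable_of_hasCompactSupport hfc.mul_right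

-- Both sides equal `-∫ f D²g(v, w)`.
theorem integral_fderiv_apply_mul_fderiv_apply_comm (hf : ContDiff ℝ 1 f)
    (hfc : HasCompactSupport f) (hg : ContDiff ℝ 2 g) (v w : E) :
    ∫ x, fderiv ℝ f x v * fderiv ℝ g x w ∂μ = ∫ x, fderiv ℝ f x w * fderiv ℝ g x v ∂μ := by
  have hg' (e : E) : ContDiff ℝ 1 (fun x => fderiv ℝ g x e) :=
    contDiff_fderiv_apply_const hg (by norm_num) e
  rw [integral_fderiv_apply_mul_of_hasCompactSupport hf hfc (hg' w),
    integral_fderiv_apply_mul_of_hasCompactSupport hf hfc (hg' v)]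
  simp only [fderiv_fderiv_apply_comm hg.contDiffAt w v]

theorem setIntegral_fderiv_apply_mul_fderiv_apply_comm {Ω : Set E} (hf : ContDiff ℝ 1 f)
    (hfc : HasCompactSupport f) (hfΩ : tsupport f ⊆ Ω) (hg : ContDiff ℝ 2 g) (v w : E) :
    ∫ x in Ω, fderiv ℝ f x v * fderiv ℝ g x w ∂μ =
      ∫ x in Ω, fderiv ℝ f x w * fderiv ℝ g x v ∂μ := by
  have hzero (e : E) : ∀ x ∉ Ω, fderiv ℝ f x e = 0 := fun x hx =>
    image_eq_zero_of_notMem_tsupport (f := fun y => fderiv ℝ f y e) fun h =>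
      hx (hfΩ (tsupport_fderiv_apply_subset ℝ e h))
  rw [setIntegral_eq_integral_of_forall_compl_eq_zero fun x hx => by rw [hzero v x hx, zero_mul],
    setIntegral_eq_integral_of_forall_compl_eq_zero fun x hx => by rw [hzero w x hx, zero_mul]]
  exact integral_fderiv_apply_mul_fderiv_apply_comm hf hfc hg v w

end IntegrationByParts

section VectorField

/-- The divergence `∂₁u₁ + ∂₂u₂` of a planar vector field. -/
noncomputable def divergence (u : ℝ × ℝ → ℝ × ℝ) (x : ℝ × ℝ) : ℝ :=
  pd1 (fun y => (u y).1) x + pd2 (fun y => (u y).2) x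

/-- The scalar curl `∂₁u₂ - ∂₂u₁` of a planar vector field. -/
noncomputable def scalarCurl (u : ℝ × ℝ → ℝ × ℝ) (x : ℝ × ℝ) : ℝ :=
  pd1 (fun y => (u y).2) x - pd2 (fun y => (u y).1) x

/-- The squared Frobenius norm `‖Du‖²` of the Jacobian matrix of a planar vector field, the density
of its Dirichlet energy. -/
noncomputable def jacobianNormSq (u : ℝ × ℝ → ℝ × ℝ) (x : ℝ × ℝ) : ℝ :=
  (pd1 (fun y => (u y).1) x) ^ 2 + (pd2 (fun y => (u y).1) x) ^ 2 +
    (pd1 (fun y => (u y).2) x) ^ 2 + (pd2 (fun y => (u y).2) x) ^ 2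

/-- The Jacobian determinant `det Du` of a planar vector field. -/
noncomputable def jacobianDet (u : ℝ × ℝ → ℝ × ℝ) (x : ℝ × ℝ) : ℝ :=
  pd1 (fun y => (u y).1) x * pd2 (fun y => (u y).2) x -
    pd2 (fun y => (u y).1) x * pd1 (fun y => (u y).2) x

variable {u : ℝ × ℝ → ℝ × ℝ}

theorem divergence_sq_add_scalarCurl_sq (u : ℝ × ℝ → ℝ × ℝ) (x : ℝ × ℝ) :
    divergence u x ^ 2 + scalarCurl u x ^ 2 = jacobianNormSq u x + 2 * jacobianDet u x := by
  simp only [divergence, scalarCurl, jacobianNormSq, jacobianDet]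
  ring

theorem integrable_jacobianNormSq (hu : ContDiff ℝ 1 u) (huc : HasCompactSupport u) :
    Integrable (jacobianNormSq u) := by
  have hint {f : ℝ × ℝ → ℝ} (hf : ContDiff ℝ 1 f) (hfc : HasCompactSupport f) (v : ℝ × ℝ) :
      Integrable (fun x => (fderiv ℝ f x v) ^ 2) := by
    simpa only [sq] using integrable_fderiv_apply_mul_fderiv_apply hf hfc hf v v
  have huc₁ : HasCompactSupport (fun x => (u x).1) := huc.comp_left rfl
  have huc₂ : HasCompactSupport (fun x => (u x).2) := huc.comp_left rfl
  exact (((hint hu.fst huc₁ _).add (hint hu.fst huc₁ _)).add (hint hu.snd huc₂ _)).add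
    (hint hu.snd huc₂ _)

theorem integrable_jacobianDet (hu : ContDiff ℝ 1 u) (huc : HasCompactSupport u) :
    Integrable (jacobianDet u) := by
  have huc₁ : HasCompactSupport (fun x => (u x).1) := huc.comp_left rfl
  exact (integrable_fderiv_apply_mul_fderiv_apply hu.fst huc₁ hu.snd _ _).sub
    (integrable_fderiv_apply_mul_fderiv_apply hu.fst huc₁ hu.snd _ _)

theorem setIntegral_jacobianDet_eq_zero {Ω : Set (ℝ × ℝ)} (hu : ContDiff ℝ 2 u)
    (huc : HasCompactSupport u) (huΩ : tsupport u ⊆ Ω) : ∫ x in Ω, jacobianDet u x = 0 := by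
  have hu₁ : ContDiff ℝ 1 u := hu.of_le one_le_two
  have huc₁ : HasCompactSupport (fun x => (u x).1) := huc.comp_left rfl
  have huΩ₁ : tsupport (fun x => (u x).1) ⊆ Ω := (tsupport_comp_subset rfl u).trans huΩ
  have hint (v w : ℝ × ℝ) := integrable_fderiv_apply_mul_fderiv_apply (μ := volume.restrict Ω)
    hu₁.fst huc₁ hu₁.snd v w
  exact (integral_sub (hint _ _) (hint _ _)).trans <| sub_eq_zero.mpr <|
    setIntegral_fderiv_apply_mul_fderiv_apply_comm hu₁.fst huc₁ huΩ₁ hu.snd _ _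

theorem setIntegral_divergence_sq_add_scalarCurl_sq {Ω : Set (ℝ × ℝ)} (hu : ContDiff ℝ 2 u)
    (huc : HasCompactSupport u) (huΩ : tsupport u ⊆ Ω) :
    ∫ x in Ω, (divergence u x ^ 2 + scalarCurl u x ^ 2) = ∫ x in Ω, jacobianNormSq u x := by
  have hu₁ : ContDiff ℝ 1 u := hu.of_le one_le_two
  simp only [divergence_sq_add_scalarCurl_sq]
  rw [integral_add (integrable_jacobianNormSq hu₁ huc).integrableOn
      ((integrable_jacobianDet hu₁ huc).const_mul 2).integrableOn,
    integral_const_mul, setIntegral_jacobianDet_eq_zero hu huc huΩ, mul_zero, add_zero]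

end VectorField

section PerpGrad

/-- The perpendicular gradient `∇^⊥ψ = (∂₂ψ, -∂₁ψ)`: the planar velocity field with stream
function `ψ`. -/
noncomputable def perpGrad (ψ : ℝ × ℝ → ℝ) (x : ℝ × ℝ) : ℝ × ℝ :=
  (pd2 ψ x, -pd1 ψ x)

variable {ψ : ℝ × ℝ → ℝ}

theorem contDiff_perpGrad {m n : WithTop ℕ∞} (hψ : ContDiff ℝ n ψ) (hmn : m + 1 ≤ n) :
    ContDiff ℝ m (perpGrad ψ) :=
  (contDiff_fderiv_apply_const hψ hmn _).prodMk (contDiff_fderiv_apply_const hψ hmn _).neg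

theorem tsupport_perpGrad_subset : tsupport (perpGrad ψ) ⊆ tsupport ψ :=
  (tsupport_comp_subset (g := fun L : ℝ × ℝ →L[ℝ] ℝ => (L (0, 1), -L (1, 0))) (by simp)
    (fderiv ℝ ψ)).trans (tsupport_fderiv_subset ℝ)

theorem hasCompactSupport_perpGrad (hψc : HasCompactSupport ψ) :
    HasCompactSupport (perpGrad ψ) :=
  hψc.of_isClosed_subset (isClosed_tsupport _) tsupport_perpGrad_subset

theorem pd1_neg (f : ℝ × ℝ → ℝ) (x : ℝ × ℝ) : pd1 (fun y => -f y) x = -pd1 f x := by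
  simp only [pd1, fderiv_fun_neg, neg_apply]

theorem pd2_neg (f : ℝ × ℝ → ℝ) (x : ℝ × ℝ) : pd2 (fun y => -f y) x = -pd2 f x := by
  simp only [pd2, fderiv_fun_neg, neg_apply]

theorem divergence_perpGrad (hψ : ContDiff ℝ 2 ψ) (x : ℝ × ℝ) :
    divergence (perpGrad ψ) x = 0 :=
  calc divergence (perpGrad ψ) x
    _ = pd1 (pd2 ψ) x - pd2 (pd1 ψ) x := by
      rw [sub_eq_add_neg, ← pd2_neg]
      rfl
    _ = 0 := sub_eq_zero.mpr (fderiv_fderiv_apply_comm hψ.contDiffAt _ _)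

theorem scalarCurl_perpGrad (ψ : ℝ × ℝ → ℝ) (x : ℝ × ℝ) :
    scalarCurl (perpGrad ψ) x = -lap ψ x := by
  rw [lap, neg_add, ← pd1_neg, ← sub_eq_add_neg]
  rfl

theorem perpGrad_ne_zero (hψ : Differentiable ℝ ψ) (hψc : HasCompactSupport ψ) (hψ0 : ψ ≠ 0) :
    perpGrad ψ ≠ 0 := by
  refine fun hperp => hψ0 (eq_zero_of_fderiv_eq_zero_of_hasCompactSupport hψ hψc fun x => ?_)
  obtain ⟨h₂, h₁⟩ : pd2 ψ x = 0 ∧ -pd1 ψ x = 0 := Prod.mk_eq_zero.mp (congrFun hperp x)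
  ext
  · simpa [pd1] using h₁
  · simpa [pd2] using h₂

theorem setIntegral_jacobianNormSq_perpGrad {Ω : Set (ℝ × ℝ)} (hψ : ContDiff ℝ 3 ψ)
    (hψc : HasCompactSupport ψ) (hψΩ : tsupport ψ ⊆ Ω) :
    ∫ x in Ω, jacobianNormSq (perpGrad ψ) x = ∫ x in Ω, lap ψ x ^ 2 := by
  rw [← setIntegral_divergence_sq_add_scalarCurl_sq (contDiff_perpGrad hψ (by norm_num))
    (hasCompactSupport_perpGrad hψc) (tsupport_perpGrad_subset.trans hψΩ)]
  simp only [divergence_perpGrad (hψ.of_le (by norm_num)), scalarCurl_perpGrad, neg_sq, ne_eq,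
    OfNat.ofNat_ne_zero, not_false_eq_true, zero_pow, zero_add]

end PerpGrad

section Quotients

/-- The values of the buckling quotient `∫ (Δψ)² / ∫ |∇ψ|²` on the nonzero `C^n` functions
compactly supported in `Ω`. -/
def bucklingQuotients (n : WithTop ℕ∞) (Ω : Set (ℝ × ℝ)) : Set ℝ :=
  {r : ℝ | ∃ ψ : ℝ × ℝ → ℝ,
    ContDiff ℝ n ψ ∧ HasCompactSupport ψ ∧ tsupport ψ ⊆ Ω ∧ ψ ≠ 0 ∧
    r = (∫ x in Ω, (lap ψ x) ^ 2) / (∫ x in Ω, ((pd1 ψ x) ^ 2 + (pd2 ψ x) ^ 2))}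

/-- The values of the Stokes quotient `∫ ‖Du‖² / ∫ |u|²` on the nonzero divergence-free `C^n`
vector fields compactly supported in `Ω`. -/
def stokesQuotients (n : WithTop ℕ∞) (Ω : Set (ℝ × ℝ)) : Set ℝ :=
  {r : ℝ | ∃ u : ℝ × ℝ → ℝ × ℝ,
    ContDiff ℝ n u ∧ HasCompactSupport u ∧ tsupport u ⊆ Ω ∧ u ≠ 0 ∧
    (∀ x : ℝ × ℝ, divergence u x = 0) ∧
    r = (∫ x in Ω, jacobianNormSq u x) / (∫ x in Ω, ((u x).1 ^ 2 + (u x).2 ^ 2))}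

variable {m n : WithTop ℕ∞} {Ω : Set (ℝ × ℝ)}

theorem bddBelow_stokesQuotients : BddBelow (stokesQuotients n Ω) := by
  refine ⟨0, ?_⟩
  rintro _ ⟨u, -, -, -, -, -, rfl⟩
  exact div_nonneg (integral_nonneg fun x => by unfold jacobianNormSq; positivity)
    (integral_nonneg fun x => by positivity)

theorem bucklingQuotients_subset_stokesQuotients (hn : 2 ≤ n) (hnm : n + 1 ≤ m) :
    bucklingQuotients m Ω ⊆ stokesQuotients n Ω := by
  rintro _ ⟨ψ, hψ, hψc, hψΩ, hψ0, rfl⟩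
  have hψ₃ : ContDiff ℝ 3 ψ := hψ.of_le <| calc
    (3 : WithTop ℕ∞) = 2 + 1 := by norm_num
    _ ≤ n + 1 := by gcongr
    _ ≤ m := hnm
  refine ⟨perpGrad ψ, contDiff_perpGrad hψ hnm, hasCompactSupport_perpGrad hψc,
    tsupport_perpGrad_subset.trans hψΩ, perpGrad_ne_zero (hψ₃.differentiable (by norm_num)) hψc hψ0,
    divergence_perpGrad (hψ₃.of_le (by norm_num)), ?_⟩
  rw [setIntegral_jacobianNormSq_perpGrad hψ₃ hψc hψΩ]
  simp only [perpGrad, neg_sq, add_comm]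

end Quotients

theorem stmt3_general {m n : WithTop ℕ∞} (hn : 2 ≤ n) (hnm : n + 1 ≤ m) (Ω : Set (ℝ × ℝ)) :
    bucklingQuotients m Ω ⊆ stokesQuotients n Ω ∧
      ((bucklingQuotients m Ω).Nonempty →
        sInf (stokesQuotients n Ω) ≤ sInf (bucklingQuotients m Ω)) :=
  have hsub := bucklingQuotients_subset_stokesQuotients hn hnm
  ⟨hsub, fun hne => csInf_le_csInf bddBelow_stokesQuotients hne hsub⟩

theorem stmt3 (Ω : Set (ℝ × ℝ)) (hΩ : IsOpen Ω) (B S : Set ℝ)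
    (hB : B = {r : ℝ | ∃ ψ : ℝ × ℝ → ℝ,
      ContDiff ℝ (⊤ : ℕ∞) ψ ∧ HasCompactSupport ψ ∧ tsupport ψ ⊆ Ω ∧ ψ ≠ 0 ∧
      r = (∫ x in Ω, (lap ψ x) ^ 2) / (∫ x in Ω, ((pd1 ψ x) ^ 2 + (pd2 ψ x) ^ 2))})
    (hS : S = {r : ℝ | ∃ u : ℝ × ℝ → ℝ × ℝ,
      ContDiff ℝ (⊤ : ℕ∞) u ∧ HasCompactSupport u ∧ tsupport u ⊆ Ω ∧ u ≠ 0 ∧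
      (∀ x : ℝ × ℝ, pd1 (fun y => (u y).1) x + pd2 (fun y => (u y).2) x = 0) ∧
      r = (∫ x in Ω,
            ((pd1 (fun y => (u y).1) x) ^ 2 + (pd2 (fun y => (u y).1) x) ^ 2 +
              (pd1 (fun y => (u y).2) x) ^ 2 + (pd2 (fun y => (u y).2) x) ^ 2)) /
          (∫ x in Ω, ((u x).1 ^ 2 + (u x).2 ^ 2))}) :
    B ⊆ S ∧ (B.Nonempty → sInf S ≤ sInf B) := by
  subst hB hS
  exact stmt3_general (WithTop.coe_le_coe.2 le_top) le_rfl Ω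
end

section
/- Let Ω ⊆ ℝ² be open, λ ∈ ℝ, let ψ : ℝ² → ℝ and p : ℝ² → ℝ be smooth on Ω, and set u = (∂₂ψ, −∂₁ψ). If Δu + λu = ∇p on Ω (componentwise), then ψ solves the buckling equation Δ(Δψ) + λΔψ = 0 on Ω. -/
/-!
Since derivatives in two directions commute, so does each of them with the Laplacian, and the
Stokes equation for `u = (∂₂ψ, -∂₁ψ)` says that `∇(Δψ) = ∇(-λψ) + (-∂₂p, ∂₁p)`. The rotated gradient
of `p` is divergence-free, so taking divergences eliminates the pressure and leaves
`Δ(Δψ) = Δ(-λψ)`. Here `Δ(Δψ)` is found by differentiating the right-hand side once, rather than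
by expanding the fourth derivatives of `ψ`.
-/

open MeasureTheory

open Filter Topology

section DirectionalDerivative

variable {𝕜 E F : Type*} [NontriviallyNormedField 𝕜] [NormedAddCommGroup E] [NormedSpace 𝕜 E]
  [NormedAddCommGroup F] [NormedSpace 𝕜 F] {f g : E → F} {x : E}

variable (𝕜) in
/-- The derivative of `f` in the direction `v`, as a function of the base point. Unlike
`lineDeriv`, it is read off the Fréchet derivative, so that `pd1` and `pd2` are the special cases
`v = (1, 0)` and `v = (0, 1)`. -/
noncomputable def dirDeriv (v : E) (f : E → F) : E → F := fun x => fderiv 𝕜 f x v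

variable (𝕜) in
/-- The sum of the second derivatives in the directions `v` and `w`: the Laplacian of the plane
with coordinate directions `v` and `w`. For `v = (1, 0)` and `w = (0, 1)` it is `lap`. -/
noncomputable def laplacianAlong (v w : E) (f : E → F) : E → F :=
  dirDeriv 𝕜 v (dirDeriv 𝕜 v f) + dirDeriv 𝕜 w (dirDeriv 𝕜 w f)

theorem dirDeriv_congr (h : f =ᶠ[𝓝 x] g) (v : E) : dirDeriv 𝕜 v f =ᶠ[𝓝 x] dirDeriv 𝕜 v g :=
  h.fderiv.fun_comp (· v)

theorem contDiffAt_dirDeriv {m n : WithTop ℕ∞} (hf : ContDiffAt 𝕜 n f x) (hmn : m + 1 ≤ n)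
    (v : E) : ContDiffAt 𝕜 m (dirDeriv 𝕜 v f) x :=
  (hf.fderiv_right hmn).clm_apply contDiffAt_const

theorem differentiableAt_dirDeriv (hf : ContDiffAt 𝕜 2 f x) (v : E) :
    DifferentiableAt 𝕜 (dirDeriv 𝕜 v f) x :=
  (contDiffAt_dirDeriv hf one_add_one_eq_two.le v).differentiableAt one_ne_zero

theorem dirDeriv_add (hf : DifferentiableAt 𝕜 f x) (hg : DifferentiableAt 𝕜 g x) (v : E) :
    dirDeriv 𝕜 v (f + g) x = dirDeriv 𝕜 v f x + dirDeriv 𝕜 v g x :=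
  DFunLike.congr_fun (fderiv_add hf hg) v

theorem dirDeriv_sub (hf : DifferentiableAt 𝕜 f x) (hg : DifferentiableAt 𝕜 g x) (v : E) :
    dirDeriv 𝕜 v (f - g) x = dirDeriv 𝕜 v f x - dirDeriv 𝕜 v g x :=
  DFunLike.congr_fun (fderiv_sub hf hg) v

theorem dirDeriv_neg (v : E) (f : E → F) : dirDeriv 𝕜 v (-f) = -dirDeriv 𝕜 v f :=
  funext fun _ => DFunLike.congr_fun fderiv_neg v

theorem dirDeriv_const_smul (v : E) (c : 𝕜) (f : E → F) :
    dirDeriv 𝕜 v (c • f) = c • dirDeriv 𝕜 v f :=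
  funext fun _ => DFunLike.congr_fun (congrFun (fderiv_const_smul_field c) _) v

theorem laplacianAlong_neg (v w : E) (f : E → F) :
    laplacianAlong 𝕜 v w (-f) = -laplacianAlong 𝕜 v w f := by
  simp only [laplacianAlong, dirDeriv_neg, neg_add]

theorem laplacianAlong_const_smul (v w : E) (c : 𝕜) (f : E → F) :
    laplacianAlong 𝕜 v w (c • f) = c • laplacianAlong 𝕜 v w f := by
  simp only [laplacianAlong, dirDeriv_const_smul, smul_add]

theorem dirDeriv_dirDeriv_eq_fderiv_fderiv (hf : DifferentiableAt 𝕜 (fderiv 𝕜 f) x) (v w : E) :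
    dirDeriv 𝕜 v (dirDeriv 𝕜 w f) x = fderiv 𝕜 (fderiv 𝕜 f) x v w := by
  change fderiv 𝕜 (fun y => fderiv 𝕜 f y w) x v = _
  simp [fderiv_clm_apply hf (differentiableAt_const w)]

end DirectionalDerivative

section Symmetry

variable {𝕜 E F : Type*} [RCLike 𝕜] [NormedAddCommGroup E] [NormedSpace 𝕜 E]
  [NormedAddCommGroup F] [NormedSpace 𝕜 F] {f g h : E → F} {x : E}

theorem dirDeriv_comm (hf : ContDiffAt 𝕜 2 f x) (v w : E) :
    dirDeriv 𝕜 v (dirDeriv 𝕜 w f) x = dirDeriv 𝕜 w (dirDeriv 𝕜 v f) x := by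
  have hf' : DifferentiableAt 𝕜 (fderiv 𝕜 f) x :=
    (hf.fderiv_right one_add_one_eq_two.le).differentiableAt one_ne_zero
  have hsymm : IsSymmSndFDerivAt 𝕜 f x :=
    hf.isSymmSndFDerivAt minSmoothness_of_isRCLikeNormedField.le
  rw [dirDeriv_dirDeriv_eq_fderiv_fderiv hf', dirDeriv_dirDeriv_eq_fderiv_fderiv hf']
  exact hsymm v w

theorem dirDeriv_dirDeriv_comm (hf : ContDiffAt 𝕜 3 f x) (v w z : E) :
    dirDeriv 𝕜 v (dirDeriv 𝕜 w (dirDeriv 𝕜 z f)) x =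
      dirDeriv 𝕜 z (dirDeriv 𝕜 v (dirDeriv 𝕜 w f)) x := by
  have hswap : dirDeriv 𝕜 w (dirDeriv 𝕜 z f) =ᶠ[𝓝 x] dirDeriv 𝕜 z (dirDeriv 𝕜 w f) :=
    ((hf.of_le (by norm_num)).eventually (by simp)).mono fun _ hy => dirDeriv_comm hy w z
  calc
    dirDeriv 𝕜 v (dirDeriv 𝕜 w (dirDeriv 𝕜 z f)) x
        = dirDeriv 𝕜 v (dirDeriv 𝕜 z (dirDeriv 𝕜 w f)) x := (dirDeriv_congr hswap v).eq_of_nhds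
    _ = dirDeriv 𝕜 z (dirDeriv 𝕜 v (dirDeriv 𝕜 w f)) x :=
        dirDeriv_comm (contDiffAt_dirDeriv hf two_add_one_eq_three.le w) v z

theorem laplacianAlong_dirDeriv (hf : ContDiffAt 𝕜 3 f x) (v w z : E) :
    laplacianAlong 𝕜 v w (dirDeriv 𝕜 z f) x = dirDeriv 𝕜 z (laplacianAlong 𝕜 v w f) x := by
  have hf' (a : E) : DifferentiableAt 𝕜 (dirDeriv 𝕜 a (dirDeriv 𝕜 a f)) x :=
    differentiableAt_dirDeriv (contDiffAt_dirDeriv hf two_add_one_eq_three.le a) a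
  rw [laplacianAlong, laplacianAlong, Pi.add_apply, dirDeriv_add (hf' v) (hf' w),
    dirDeriv_dirDeriv_comm hf v v z, dirDeriv_dirDeriv_comm hf w w z]

theorem laplacianAlong_eq_of_grad_eq_grad_add_rot {v w : E} (hg : ContDiffAt 𝕜 2 g x)
    (hh : ContDiffAt 𝕜 2 h x)
    (hv : dirDeriv 𝕜 v f =ᶠ[𝓝 x] dirDeriv 𝕜 v g - dirDeriv 𝕜 w h)
    (hw : dirDeriv 𝕜 w f =ᶠ[𝓝 x] dirDeriv 𝕜 w g + dirDeriv 𝕜 v h) :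
    laplacianAlong 𝕜 v w f x = laplacianAlong 𝕜 v w g x := by
  have hg' := differentiableAt_dirDeriv hg
  have hh' := differentiableAt_dirDeriv hh
  have hfv : dirDeriv 𝕜 v (dirDeriv 𝕜 v f) x =
      dirDeriv 𝕜 v (dirDeriv 𝕜 v g) x - dirDeriv 𝕜 v (dirDeriv 𝕜 w h) x :=
    (dirDeriv_congr hv v).eq_of_nhds.trans (dirDeriv_sub (hg' v) (hh' w) v)
  have hfw : dirDeriv 𝕜 w (dirDeriv 𝕜 w f) x =
      dirDeriv 𝕜 w (dirDeriv 𝕜 w g) x + dirDeriv 𝕜 w (dirDeriv 𝕜 v h) x :=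
    (dirDeriv_congr hw w).eq_of_nhds.trans (dirDeriv_add (hg' w) (hh' v) w)
  rw [laplacianAlong, laplacianAlong, Pi.add_apply, Pi.add_apply, hfv, hfw, dirDeriv_comm hh w v]
  abel

theorem stmt6_general (v w : E) (lam : 𝕜) {ψ p : E → F}
    (hψ : ContDiffAt 𝕜 3 ψ x) (hp : ContDiffAt 𝕜 2 p x)
    (hv : laplacianAlong 𝕜 v w (dirDeriv 𝕜 w ψ) + lam • dirDeriv 𝕜 w ψ =ᶠ[𝓝 x] dirDeriv 𝕜 v p)
    (hw : laplacianAlong 𝕜 v w (-dirDeriv 𝕜 v ψ) + lam • -dirDeriv 𝕜 v ψ =ᶠ[𝓝 x]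
      dirDeriv 𝕜 w p) :
    laplacianAlong 𝕜 v w (laplacianAlong 𝕜 v w ψ) x + lam • laplacianAlong 𝕜 v w ψ x = 0 := by
  have hψ' := hψ.eventually (by simp)
  have hLw : dirDeriv 𝕜 w (laplacianAlong 𝕜 v w ψ) =ᶠ[𝓝 x]
      dirDeriv 𝕜 w (-lam • ψ) + dirDeriv 𝕜 v p := by
    filter_upwards [hv, hψ'] with y hy hψy
    rw [Pi.add_apply, laplacianAlong_dirDeriv hψy] at hy
    rw [dirDeriv_const_smul, Pi.add_apply, ← hy, Pi.smul_apply, Pi.smul_apply]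
    module
  have hLv : dirDeriv 𝕜 v (laplacianAlong 𝕜 v w ψ) =ᶠ[𝓝 x]
      dirDeriv 𝕜 v (-lam • ψ) - dirDeriv 𝕜 w p := by
    filter_upwards [hw, hψ'] with y hy hψy
    rw [Pi.add_apply, laplacianAlong_neg, Pi.neg_apply, laplacianAlong_dirDeriv hψy] at hy
    rw [dirDeriv_const_smul, Pi.sub_apply, ← hy, Pi.smul_apply, Pi.smul_apply, Pi.neg_apply]
    module
  have hψ₂ : ContDiffAt 𝕜 2 (-lam • ψ) x := (hψ.of_le (by norm_num)).const_smul (-lam)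
  rw [laplacianAlong_eq_of_grad_eq_grad_add_rot hψ₂ hp hLv hLw, laplacianAlong_const_smul,
    Pi.smul_apply, neg_smul, neg_add_cancel]

end Symmetry

theorem stmt6 (Ω : Set (ℝ × ℝ)) (hΩ : IsOpen Ω) (lam : ℝ)
    (ψ : ℝ × ℝ → ℝ) (p : ℝ × ℝ → ℝ)
    (hψ : ContDiffOn ℝ (⊤ : ℕ∞) ψ Ω) (hp : ContDiffOn ℝ (⊤ : ℕ∞) p Ω)
    (u : ℝ × ℝ → ℝ × ℝ) (hu : u = fun x => (pd2 ψ x, - pd1 ψ x))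
    (heq : ∀ x ∈ Ω,
      lap (fun y => (u y).1) x + lam * (u x).1 = pd1 p x ∧
      lap (fun y => (u y).2) x + lam * (u x).2 = pd2 p x) :
    ∀ x ∈ Ω, lap (lap ψ) x + lam * lap ψ x = 0 := by
  subst hu
  intro x hx
  have hΩx := hΩ.mem_nhds hx
  exact stmt6_general (1, 0) (0, 1) lam (contDiffAt_infty.1 (hψ.contDiffAt hΩx) 3)
    (contDiffAt_infty.1 (hp.contDiffAt hΩx) 2)
    (eventually_of_mem hΩx fun y hy => (heq y hy).1)
    (eventually_of_mem hΩx fun y hy => (heq y hy).2)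
end
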